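/- arXiv:math/0611235 — 3 statements merged into one kernel-verified Lean document; each statement's English description precedes it below -/
import Mathlib

section
/- For every s ∈ [0,1] and every constant c > 0, letting p_t(r) = c · e^{−t/8} · t^{−3/2} · sinh(r) · ∫_r^∞ σ·e^{−σ²/(2t)}·(cosh(σ) − cosh(r))^{−1/2} dσ for t > 0 and r > 0, one has lim_{t→∞} ∫_0^∞ |p_t(r) − p_t(r+s)| dr = 0. -/
open MeasureTheory Filter Real

/-- The density of the radial part of hyperbolic Brownian motion at time `t`
(with a multiplicative constant `c`). -/
noncomputable def pdens (c t r : ℝ) : ℝ :=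
  c * Real.exp (-t / 8) * t ^ (-(3 : ℝ) / 2) * Real.sinh r *
    ∫ σ in Set.Ioi r,
      σ * Real.exp (-σ ^ 2 / (2 * t)) * (Real.cosh σ - Real.cosh r) ^ (-(1 : ℝ) / 2)

/-!
The radial part obeys a local central limit theorem: it drifts at speed `1 / 2` and fluctuates on
the scale `√t`. Substituting `σ = r + u` and completing the square in `-t / 8 - σ ^ 2 / (2 * t)`
gives
`√t * p_t(r) = c * ∫ u in (0, ∞), (1 / 2 + z / √t) * exp (-z ^ 2 / 2) * w(r, u)`,
with `z = (r + u - t / 2) / √t` and `w(r, u)` converging as `r → ∞`. Hence `√t * p_t` is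
asymptotically a Gaussian in `y = (r - t / 2) / √t`, with a majorant decaying exponentially in
`|y|`. A translation by `s` moves `y` by `s / √t → 0`, so dominated convergence in `y` kills the
`L¹` norm of the difference.
-/

open scoped Topology

section Rescaling

theorem mul_add_add_sub_div {K : Type*} [Field K] {a : K} (ha : a ≠ 0) (y b h : K) :
    (a * y + b + h - b) / a = y + h / a := by
  field_simp
  ring

variable {E : Type*} [NormedAddCommGroup E] [NormedSpace ℝ E]

theorem integral_smul_comp_mul_add (f : ℝ → E) {a : ℝ} (ha : 0 < a) (b : ℝ) :
    ∫ y, a • f (a * y + b) = ∫ x, f x := by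
  rw [integral_smul, Measure.integral_comp_mul_left (fun x => f (x + b)),
    integral_add_right_eq_self, abs_of_pos (inv_pos.2 ha), smul_inv_smul₀ ha.ne']

theorem setIntegral_Ioi_comp_const_add (f : ℝ → E) (r : ℝ) :
    ∫ u in Set.Ioi 0, f (r + u) = ∫ x in Set.Ioi r, f x := by
  have h := (measurePreserving_add_left volume r).setIntegral_preimage_emb
    (measurableEmbedding_addLeft r) f (Set.Ioi r)
  simpa using h

variable {ι : Type*} {l : Filter ι} {f : ι → ℝ → E} {m σ : ι → ℝ} {g : ℝ → E}

/-- `hlim` is continuous convergence of the rescaled functions, so it gives the same limit `g y`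
along `r` and along `r + s`, whose rescaled positions differ by `s / σ → 0`. -/
theorem tendsto_smul_sub_comp_add (hσ : Tendsto σ l atTop)
    (hlim : ∀ (y : ℝ) (ρ : ι → ℝ), Tendsto (fun i => (ρ i - m i) / σ i) l (𝓝 y) →
      Tendsto (fun i => σ i • f i (ρ i)) l (𝓝 (g y))) (y s : ℝ) :
    Tendsto (fun i => σ i • (f i (σ i * y + m i) - f i (σ i * y + m i + s))) l (𝓝 0) := by
  have hshift (h : ℝ) : Tendsto (fun i => (σ i * y + m i + h - m i) / σ i) l (𝓝 y) := by
    have hy : Tendsto (fun i => y + h / σ i) l (𝓝 y) := by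
      simpa using (hσ.const_div_atTop h).const_add y
    refine hy.congr' ?_
    filter_upwards [hσ.eventually_ne_atTop 0] with i hi using (mul_add_add_sub_div hi y _ h).symm
  have h0 := hlim y _ (hshift 0)
  have hs := hlim y _ (hshift s)
  simpa [smul_sub] using h0.sub hs

theorem norm_smul_sub_comp_add_le {φ : ℝ → E} {A : Set ℝ} {G H : ℝ → ℝ} {a b s y : ℝ}
    (ha : 0 < a) (hsa : |s| ≤ a) (hbound : ∀ r ∈ A, ‖a • φ r‖ ≤ G ((r - b) / a))
    (hG : ∀ y h, |h| ≤ 1 → G (y + h) ≤ H y) (hy : a * y + b ∈ A) (hys : a * y + b + s ∈ A) :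
    ‖a • (φ (a * y + b) - φ (a * y + b + s))‖ ≤ H y + H y := by
  have hshift (h : ℝ) (hh : |h| ≤ a) (hmem : a * y + b + h ∈ A) :
      ‖a • φ (a * y + b + h)‖ ≤ H y := by
    refine (hbound _ hmem).trans ?_
    rw [mul_add_add_sub_div ha.ne']
    exact hG y _ (by rwa [abs_div, abs_of_pos ha, div_le_one ha])
  have h0 : ‖a • φ (a * y + b)‖ ≤ H y := by
    simpa using hshift 0 (by simpa using ha.le) (by simpa using hy)
  rw [smul_sub]
  exact (norm_sub_le _ _).trans (add_le_add h0 (hshift s hsa hys))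

theorem tendsto_setIntegral_norm_sub_comp_add [l.IsCountablyGenerated] {A : Set ℝ}
    {G H : ℝ → ℝ} {s : ℝ} (hσ : Tendsto σ l atTop) (hA : MeasurableSet A)
    (hAs : ∀ r ∈ A, r + s ∈ A) (hf : ∀ i, StronglyMeasurable (f i))
    (hbound : ∀ᶠ i in l, ∀ r ∈ A, ‖σ i • f i r‖ ≤ G ((r - m i) / σ i))
    (hG : ∀ y h, |h| ≤ 1 → G (y + h) ≤ H y) (hH : Integrable H)
    (hlim : ∀ (y : ℝ) (ρ : ι → ℝ), Tendsto (fun i => (ρ i - m i) / σ i) l (𝓝 y) →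
      Tendsto (fun i => σ i • f i (ρ i)) l (𝓝 (g y))) :
    Tendsto (fun i => ∫ r in A, ‖f i r - f i (r + s)‖) l (𝓝 0) := by
  set D : ι → ℝ → ℝ := fun i => A.indicator fun r => ‖f i r - f i (r + s)‖
  have hD (i : ι) : Measurable (D i) :=
    ((hf i).sub ((hf i).comp_measurable (measurable_id.add_const s))).norm.measurable.indicator hA
  have hnorm (i : ι) (r : ℝ) :
      ‖σ i • D i r‖ = A.indicator (fun r => ‖σ i • (f i r - f i (r + s))‖) r := by
    by_cases hr : r ∈ A <;> simp [D, hr, norm_smul]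
  have hrescale : ∀ᶠ i in l, ∫ y, σ i • D i (σ i * y + m i) =
      ∫ r in A, ‖f i r - f i (r + s)‖ := by
    filter_upwards [hσ.eventually_gt_atTop 0] with i hi
    rw [integral_smul_comp_mul_add (D i) hi, integral_indicator hA]
  refine Tendsto.congr' hrescale ?_
  rw [← integral_zero ℝ ℝ]
  refine tendsto_integral_filter_of_dominated_convergence (fun y => |H y| + |H y|) ?_ ?_
    (hH.abs.add hH.abs) ?_
  · exact .of_forall fun i =>
      (((hD i).comp (by fun_prop)).const_smul (σ i)).aestronglyMeasurable
  · filter_upwards [hbound, hσ.eventually_gt_atTop 0, hσ.eventually_ge_atTop |s|] with i hi hpos hsi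
    refine .of_forall fun y => ?_
    rw [hnorm]
    refine Set.indicator_apply_le' (fun hr => ?_) fun _ => by positivity
    exact (norm_smul_sub_comp_add_le hpos hsi hi hG hr (hAs _ hr)).trans
      (add_le_add (le_abs_self _) (le_abs_self _))
  · refine .of_forall fun y => ?_
    refine squeeze_zero_norm' ?_ (by simpa using (tendsto_smul_sub_comp_add hσ hlim y s).norm)
    refine .of_forall fun i => ?_
    rw [hnorm]
    exact Set.indicator_le_self' (fun _ _ => norm_nonneg _) _

end Rescaling

section Elementary

theorem integrable_exp_neg_mul_abs {b : ℝ} (hb : 0 < b) :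
    Integrable fun x : ℝ => exp (-b * |x|) := by
  have h := (integrable_fun_norm_addHaar (volume : Measure ℝ) (f := fun x => exp (-b * x))).2
  simpa using h (by simpa using exp_neg_integrableOn_Ioi 0 hb)

theorem exp_neg_mul_abs_add_le {b : ℝ} (hb : 0 ≤ b) (x h : ℝ) :
    exp (-b * |x + h|) ≤ exp (b * |h|) * exp (-b * |x|) := by
  have hx : |x| ≤ |x + h| + |h| := by simpa using abs_sub (x + h) h
  rw [← exp_add, exp_le_exp]
  linarith [mul_le_mul_of_nonneg_left hx hb]

theorem cosh_lt_cosh_add {r u : ℝ} (hr : 0 ≤ r) (hu : 0 < u) : cosh r < cosh (r + u) := by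
  rw [cosh_lt_cosh, abs_of_nonneg hr, abs_of_pos (by positivity)]
  exact lt_add_of_pos_right r hu

theorem sinh_mul_le_cosh_add_sub_cosh {r u : ℝ} (hr : 0 ≤ r) (hu : 0 ≤ u) :
    sinh r * u ≤ cosh (r + u) - cosh r := by
  have hcosh : cosh r ≤ cosh r * cosh u := le_mul_of_one_le_right (cosh_pos r).le (one_le_cosh u)
  have hsinh : sinh r * u ≤ sinh r * sinh u :=
    mul_le_mul_of_nonneg_left (self_le_sinh_iff.2 hu) (sinh_nonneg_iff.2 hr)
  rw [cosh_add]
  linarith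

theorem sinh_le_exp (r : ℝ) : sinh r ≤ exp r := by
  rw [← sinh_add_cosh]
  exact le_add_of_nonneg_right (cosh_pos r).le

theorem tendsto_exp_neg_sq_atTop : Tendsto (fun r : ℝ => exp (-r) ^ 2) atTop (𝓝 0) := by
  simpa using tendsto_exp_neg_atTop_nhds_zero.pow 2

theorem tendsto_sinh_mul_exp_neg_atTop :
    Tendsto (fun r => sinh r * exp (-r)) atTop (𝓝 (1 / 2)) := by
  have h := (tendsto_exp_neg_sq_atTop.const_sub 1).div_const 2
  rw [sub_zero] at h
  refine h.congr fun r => ?_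
  rw [sinh_eq, exp_neg]
  field_simp

theorem tendsto_cosh_mul_exp_neg_atTop :
    Tendsto (fun r => cosh r * exp (-r)) atTop (𝓝 (1 / 2)) := by
  have h := (tendsto_exp_neg_sq_atTop.const_add 1).div_const 2
  rw [add_zero] at h
  refine h.congr fun r => ?_
  rw [cosh_eq, exp_neg]
  field_simp

theorem tendsto_cosh_add_sub_cosh_mul_exp_neg_atTop (u : ℝ) :
    Tendsto (fun r => (cosh (r + u) - cosh r) * exp (-r)) atTop (𝓝 ((exp u - 1) / 2)) := by
  have hshift := (tendsto_cosh_mul_exp_neg_atTop.comp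
    (tendsto_atTop_add_const_right atTop u tendsto_id)).mul_const (exp u)
  have h := hshift.sub tendsto_cosh_mul_exp_neg_atTop
  rw [show 1 / 2 * exp u - 1 / 2 = (exp u - 1) / 2 by ring] at h
  refine h.congr fun r => ?_
  simp only [Function.comp_apply, id_eq, exp_add, exp_neg]
  field_simp

end Elementary

section RadialWeight

/-- The angular part `w(r, u)` of the integrand of `pdens` at `σ = r + u`, normalised by
`exp (-(r + u) / 2)`, the drift term left over by completing the square in the Gaussian factor. -/
noncomputable def radialWeight (r u : ℝ) : ℝ :=
  sinh r * exp (-(r + u) / 2) * (cosh (r + u) - cosh r) ^ (-(1 : ℝ) / 2)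

/-- The limit of `radialWeight r u` as `r → ∞`. -/
noncomputable def limitRadialWeight (u : ℝ) : ℝ :=
  1 / 2 * exp (-u / 2) * ((exp u - 1) / 2) ^ (-(1 : ℝ) / 2)

variable {r u : ℝ}

theorem radialWeight_nonneg (hr : 0 ≤ r) (hu : 0 < u) : 0 ≤ radialWeight r u := by
  have hsinh : 0 ≤ sinh r := sinh_nonneg_iff.2 hr
  have hcosh : 0 ≤ cosh (r + u) - cosh r := (sub_pos.2 (cosh_lt_cosh_add hr hu)).le
  exact mul_nonneg (mul_nonneg hsinh (exp_pos _).le) (rpow_nonneg hcosh _)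

theorem radialWeight_le (hr : 0 < r) (hu : 0 < u) :
    radialWeight r u ≤ u ^ (-(1 : ℝ) / 2) * exp (-(1 / 2) * u) := by
  have hsinh : 0 < sinh r := sinh_pos_iff.2 hr
  have hcosh : (cosh (r + u) - cosh r) ^ (-(1 : ℝ) / 2) ≤
      sinh r ^ (-(1 : ℝ) / 2) * u ^ (-(1 : ℝ) / 2) := by
    rw [← mul_rpow hsinh.le hu.le]
    exact rpow_le_rpow_of_nonpos (by positivity) (sinh_mul_le_cosh_add_sub_cosh hr.le hu.le)
      (by norm_num)
  have hroot : sinh r * sinh r ^ (-(1 : ℝ) / 2) ≤ exp (r / 2) := by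
    rw [mul_comm, ← rpow_add_one hsinh.ne', div_eq_mul_one_div r, exp_mul]
    norm_num only
    exact rpow_le_rpow hsinh.le (sinh_le_exp r) (by norm_num)
  calc radialWeight r u
      ≤ sinh r * exp (-(r + u) / 2) * (sinh r ^ (-(1 : ℝ) / 2) * u ^ (-(1 : ℝ) / 2)) := by
        unfold radialWeight
        gcongr
    _ = sinh r * sinh r ^ (-(1 : ℝ) / 2) * (exp (-(r + u) / 2) * u ^ (-(1 : ℝ) / 2)) := by ring
    _ ≤ exp (r / 2) * (exp (-(r + u) / 2) * u ^ (-(1 : ℝ) / 2)) := by gcongr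
    _ = u ^ (-(1 : ℝ) / 2) * exp (-(1 / 2) * u) := by
        rw [← mul_assoc, ← exp_add, mul_comm]
        ring_nf

theorem tendsto_radialWeight_atTop (hu : 0 < u) :
    Tendsto (fun r => radialWeight r u) atTop (𝓝 (limitRadialWeight u)) := by
  have hlim : (exp u - 1) / 2 ≠ 0 := by
    have := one_lt_exp_iff.2 hu
    linarith
  have h := (tendsto_sinh_mul_exp_neg_atTop.mul_const (exp (-u / 2))).mul
    ((tendsto_cosh_add_sub_cosh_mul_exp_neg_atTop u).rpow_const (p := -(1 : ℝ) / 2) (.inl hlim))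
  refine h.congr' ?_
  filter_upwards [eventually_ge_atTop 0] with r hr
  have hexp : exp (-(r + u) / 2) = exp (-r) * exp (-u / 2) * exp (-r * (-1 / 2)) := by
    rw [← exp_add, ← exp_add]
    ring_nf
  rw [mul_rpow (sub_pos.2 (cosh_lt_cosh_add hr hu)).le (exp_pos _).le, ← exp_mul,
    radialWeight, hexp]
  ring

end RadialWeight

section TiltedGaussian

/-- The Gaussian profile `exp (-z ^ 2 / 2)` with the linear factor `1 / 2 + z / T`, which for
`T = √t` and `z = (σ - t / 2) / √t` is the factor `σ / t` of the heat kernel. -/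
noncomputable def tiltedGaussian (T z : ℝ) : ℝ :=
  (1 / 2 + z / T) * exp (-z ^ 2 / 2)

theorem abs_tiltedGaussian_le {T : ℝ} (hT : 1 ≤ T) (z : ℝ) :
    |tiltedGaussian T z| ≤ exp 1 * exp (-(1 / 4) * |z|) := by
  have hlinear : |1 / 2 + z / T| ≤ exp |z| := by
    have hdiv : |z / T| ≤ |z| := by
      rw [abs_div, abs_of_pos (by positivity : 0 < T)]
      exact div_le_self (abs_nonneg z) hT
    have htri := abs_add_le (1 / 2) (z / T)
    rw [abs_of_pos (one_half_pos : (0 : ℝ) < 1 / 2)] at htri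
    linarith [add_one_le_exp |z|]
  calc |tiltedGaussian T z|
      = |1 / 2 + z / T| * exp (-z ^ 2 / 2) := by rw [tiltedGaussian, abs_mul, abs_exp]
    _ ≤ exp |z| * exp (-z ^ 2 / 2) := by gcongr
    _ ≤ exp 1 * exp (-(1 / 4) * |z|) := by
        rw [← exp_add, ← exp_add, exp_le_exp, ← sq_abs z]
        nlinarith [sq_nonneg (|z| - 5 / 4)]

theorem tendsto_tiltedGaussian {ι : Type*} {l : Filter ι} {T z : ι → ℝ} {y : ℝ}
    (hT : Tendsto T l atTop) (hz : Tendsto z l (𝓝 y)) :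
    Tendsto (fun i => tiltedGaussian (T i) (z i)) l (𝓝 (1 / 2 * exp (-y ^ 2 / 2))) := by
  have hlinear : Tendsto (fun i => 1 / 2 + z i / T i) l (𝓝 (1 / 2)) := by
    simpa only [add_zero] using (hz.div_atTop hT).const_add (1 / 2)
  exact hlinear.mul ((hz.pow 2).neg.div_const 2).rexp

end TiltedGaussian

section RadialDensity

theorem sqrt_mul_rpow_neg_three_half {t : ℝ} (ht : 0 < t) : √t * t ^ (-(3 : ℝ) / 2) = 1 / t := by
  rw [sqrt_eq_rpow, ← rpow_add ht, one_div t, ← rpow_neg_one]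
  norm_num only

theorem exp_neg_div_eight_mul_exp_neg_sq_div {t : ℝ} (ht : 0 < t) (σ : ℝ) :
    exp (-t / 8) * exp (-σ ^ 2 / (2 * t)) =
      exp (-((σ - t / 2) / √t) ^ 2 / 2) * exp (-σ / 2) := by
  rw [← exp_add, ← exp_add, div_pow, sq_sqrt ht.le]
  congr 1
  field_simp
  ring

theorem one_half_add_sub_half_div_sqrt {t : ℝ} (ht : 0 < t) (σ : ℝ) :
    1 / 2 + (σ - t / 2) / √t / √t = σ / t := by
  rw [div_div, mul_self_sqrt ht.le]
  field_simp
  ring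

theorem sqrt_mul_pdens (c : ℝ) {t : ℝ} (ht : 0 < t) (r : ℝ) :
    √t * pdens c t r = c * ∫ u in Set.Ioi 0,
      tiltedGaussian √t ((r + u - t / 2) / √t) * radialWeight r u := by
  simp only [pdens, ← setIntegral_Ioi_comp_const_add _ r, ← integral_const_mul]
  congr 1 with u
  rw [tiltedGaussian, radialWeight, one_half_add_sub_half_div_sqrt ht]
  calc _ = c * (√t * t ^ (-(3 : ℝ) / 2)) *
        (exp (-t / 8) * exp (-(r + u) ^ 2 / (2 * t))) * (r + u) *
          (sinh r * (cosh (r + u) - cosh r) ^ (-(1 : ℝ) / 2)) := by ring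
    _ = _ := by
      rw [sqrt_mul_rpow_neg_three_half ht, exp_neg_div_eight_mul_exp_neg_sq_div ht]
      ring

theorem stronglyMeasurable_pdens (c t : ℝ) : StronglyMeasurable (pdens c t) := by
  have hshift : pdens c t = fun r => c * exp (-t / 8) * t ^ (-(3 : ℝ) / 2) * sinh r *
      ∫ u in Set.Ioi 0, (r + u) * exp (-(r + u) ^ 2 / (2 * t)) *
        (cosh (r + u) - cosh r) ^ (-(1 : ℝ) / 2) := by
    ext r
    rw [pdens, ← setIntegral_Ioi_comp_const_add]
  rw [hshift]
  refine StronglyMeasurable.mul (by fun_prop) (StronglyMeasurable.integral_prod_right ?_)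
  refine Measurable.stronglyMeasurable ?_
  unfold Function.uncurry
  fun_prop

theorem integrableOn_rpow_neg_half_mul_exp :
    IntegrableOn (fun u : ℝ => u ^ (-(1 : ℝ) / 2) * exp (-(1 / 4) * u)) (Set.Ioi 0) := by
  simpa using integrableOn_rpow_mul_exp_neg_mul_rpow (p := 1) (s := -(1 : ℝ) / 2) (b := 1 / 4)
    (by norm_num) one_pos (by norm_num)

theorem abs_tiltedGaussian_mul_radialWeight_le {T r u : ℝ} (hT : 1 ≤ T) (hr : 0 < r)
    (hu : 0 < u) (m : ℝ) :
    |tiltedGaussian T ((r + u - m) / T) * radialWeight r u| ≤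
      exp 1 * exp (-(1 / 4) * |(r - m) / T|) * (u ^ (-(1 : ℝ) / 2) * exp (-(1 / 4) * u)) := by
  set z := (r + u - m) / T with hz
  have hshift : exp (-(1 / 4) * |z|) ≤ exp (1 / 4 * u) * exp (-(1 / 4) * |(r - m) / T|) := by
    have hdiv : |u / T| ≤ u := by
      rw [abs_of_pos (by positivity)]
      exact div_le_self hu.le hT
    rw [show z = (r - m) / T + u / T by rw [hz]; ring]
    refine (exp_neg_mul_abs_add_le (by norm_num) _ _).trans ?_
    gcongr
  rw [abs_mul, abs_of_nonneg (radialWeight_nonneg hr.le hu)]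
  calc |tiltedGaussian T z| * radialWeight r u
      ≤ exp 1 * (exp (1 / 4 * u) * exp (-(1 / 4) * |(r - m) / T|)) *
          (u ^ (-(1 : ℝ) / 2) * exp (-(1 / 2) * u)) := by
        gcongr
        · exact radialWeight_nonneg hr.le hu
        · exact (abs_tiltedGaussian_le hT z).trans (by gcongr)
        · exact radialWeight_le hr hu
    _ = exp 1 * exp (-(1 / 4) * |(r - m) / T|) *
          (u ^ (-(1 : ℝ) / 2) * (exp (1 / 4 * u) * exp (-(1 / 2) * u))) := by ring
    _ = _ := by rw [← exp_add (1 / 4 * u), show 1 / 4 * u + -(1 / 2) * u = -(1 / 4) * u by ring]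

theorem exists_abs_sqrt_mul_pdens_le (c : ℝ) : ∃ C, 0 ≤ C ∧ ∀ t r : ℝ, 1 ≤ t → 0 < r →
    |√t * pdens c t r| ≤ C * exp (-(1 / 4) * |(r - t / 2) / √t|) := by
  set I := ∫ u in Set.Ioi (0 : ℝ), u ^ (-(1 : ℝ) / 2) * exp (-(1 / 4) * u)
  have hI : 0 ≤ I := setIntegral_nonneg measurableSet_Ioi fun u (hu : 0 < u) => by positivity
  refine ⟨|c| * (exp 1 * I), by positivity, fun t r ht hr => ?_⟩
  have hT : 1 ≤ √t := one_le_sqrt.2 ht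
  have hint :
      |∫ u in Set.Ioi 0, tiltedGaussian √t ((r + u - t / 2) / √t) * radialWeight r u| ≤
        exp 1 * exp (-(1 / 4) * |(r - t / 2) / √t|) * I := by
    rw [← norm_eq_abs, ← integral_const_mul]
    refine norm_integral_le_of_norm_le (integrableOn_rpow_neg_half_mul_exp.const_mul _) ?_
    filter_upwards [ae_restrict_mem measurableSet_Ioi] with u hu
    exact abs_tiltedGaussian_mul_radialWeight_le hT hr hu _
  rw [sqrt_mul_pdens c (by positivity), abs_mul]
  calc _ ≤ |c| * (exp 1 * exp (-(1 / 4) * |(r - t / 2) / √t|) * I) := by gcongr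
    _ = _ := by ring

variable {ρ : ℝ → ℝ} {y : ℝ}

theorem tendsto_atTop_of_tendsto_sub_half_div_sqrt
    (hρ : Tendsto (fun t => (ρ t - t / 2) / √t) atTop (𝓝 y)) : Tendsto ρ atTop atTop := by
  have h := tendsto_sqrt_atTop.atTop_mul_atTop₀
    (hρ.add_atTop (tendsto_sqrt_atTop.atTop_div_const two_pos))
  refine h.congr' ?_
  filter_upwards [eventually_gt_atTop 0] with t ht
  rw [mul_add, mul_div_cancel₀ _ (sqrt_pos.2 ht).ne', ← mul_div_assoc, mul_self_sqrt ht.le]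
  ring

theorem tendsto_integral_tiltedGaussian_mul_radialWeight
    (hρ : Tendsto (fun t => (ρ t - t / 2) / √t) atTop (𝓝 y)) :
    Tendsto (fun t => ∫ u in Set.Ioi 0,
        tiltedGaussian √t ((ρ t + u - t / 2) / √t) * radialWeight (ρ t) u) atTop
      (𝓝 (∫ u in Set.Ioi 0, 1 / 2 * exp (-y ^ 2 / 2) * limitRadialWeight u)) := by
  have hρ_atTop := tendsto_atTop_of_tendsto_sub_half_div_sqrt hρ
  refine tendsto_integral_filter_of_dominated_convergence
    (fun u => exp 1 * (u ^ (-(1 : ℝ) / 2) * exp (-(1 / 4) * u))) ?_ ?_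
    (integrableOn_rpow_neg_half_mul_exp.const_mul _) ?_
  · refine .of_forall fun t => Measurable.aestronglyMeasurable ?_
    unfold tiltedGaussian radialWeight
    fun_prop
  · filter_upwards [eventually_ge_atTop 1, hρ_atTop.eventually_gt_atTop 0] with t ht hr
    filter_upwards [ae_restrict_mem measurableSet_Ioi] with u (hu : 0 < u)
    refine (abs_tiltedGaussian_mul_radialWeight_le (one_le_sqrt.2 ht) hr hu _).trans ?_
    gcongr
    exact mul_le_of_le_one_right (exp_pos 1).le
      (exp_le_one_iff.2 (by linarith [abs_nonneg ((ρ t - t / 2) / √t)]))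
  · filter_upwards [ae_restrict_mem measurableSet_Ioi] with u hu
    have hz : Tendsto (fun t => (ρ t + u - t / 2) / √t) atTop (𝓝 y) := by
      have h := hρ.add (tendsto_sqrt_atTop.const_div_atTop u)
      rw [add_zero] at h
      exact h.congr fun t => by ring
    exact (tendsto_tiltedGaussian tendsto_sqrt_atTop hz).mul
      ((tendsto_radialWeight_atTop hu).comp hρ_atTop)

theorem tendsto_sqrt_mul_pdens (c : ℝ)
    (hρ : Tendsto (fun t => (ρ t - t / 2) / √t) atTop (𝓝 y)) :
    Tendsto (fun t => √t * pdens c t (ρ t)) atTop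
      (𝓝 (c * ∫ u in Set.Ioi 0, 1 / 2 * exp (-y ^ 2 / 2) * limitRadialWeight u)) := by
  refine ((tendsto_integral_tiltedGaussian_mul_radialWeight hρ).const_mul c).congr' ?_
  filter_upwards [eventually_gt_atTop 0] with t ht using (sqrt_mul_pdens c ht _).symm

end RadialDensity

theorem heat_kernel_L1_regularity_general {s : ℝ} (hs : 0 ≤ s) (c : ℝ) :
    Tendsto (fun t : ℝ => ∫ r in Set.Ioi (0 : ℝ), |pdens c t r - pdens c t (r + s)|)
      atTop (𝓝 0) := by
  obtain ⟨C, hC, hbound⟩ := exists_abs_sqrt_mul_pdens_le c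
  have hmajorant (y h : ℝ) (hh : |h| ≤ 1) :
      C * exp (-(1 / 4) * |y + h|) ≤ C * (exp (1 / 4) * exp (-(1 / 4) * |y|)) := by
    refine mul_le_mul_of_nonneg_left ((exp_neg_mul_abs_add_le (by norm_num) y h).trans ?_) hC
    gcongr
    linarith
  have hintegrable : Integrable fun y : ℝ => C * (exp (1 / 4) * exp (-(1 / 4) * |y|)) :=
    ((integrable_exp_neg_mul_abs (by norm_num)).const_mul _).const_mul C
  exact tendsto_setIntegral_norm_sub_comp_add
    (G := fun z => C * exp (-(1 / 4) * |z|)) tendsto_sqrt_atTop measurableSet_Ioi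
    (fun r hr => add_pos_of_pos_of_nonneg hr hs) (stronglyMeasurable_pdens c)
    ((eventually_ge_atTop 1).mono fun t ht r hr => hbound t r ht hr) hmajorant hintegrable
    fun _ _ hρ => tendsto_sqrt_mul_pdens c hρ

theorem heat_kernel_L1_regularity (s c : ℝ) (hs : s ∈ Set.Icc (0 : ℝ) 1) (hc : 0 < c) :
    Tendsto (fun t : ℝ => ∫ r in Set.Ioi (0 : ℝ), |pdens c t r - pdens c t (r + s)|)
      atTop (nhds 0) :=
  heat_kernel_L1_regularity_general hs.1 c
end

section
/- For every t > 0, the function p_t(r) = π^{−1/2} · e^{−t/8} · t^{−3/2} · sinh(r) · ∫_r^∞ σ·e^{−σ²/(2t)}·(cosh(σ) − cosh(r))^{−1/2} dσ is a probability density on (0,∞); that is, ∫_0^∞ p_t(r) dr = 1. -/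
open MeasureTheory Filter Real

/-!
Exchanging the order of integration over `0 < r < σ` makes the inner integral elementary:
`sinh r * (cosh σ - cosh r) ^ (-1/2)` is the `r`-derivative of
`-2 * (cosh σ - cosh r) ^ (1/2)`, so its integral over `(0, σ)` is
`2 * √(cosh σ - 1) = 2 * √2 * sinh (σ / 2)`. What remains is the half-line integral of
`σ * exp (-σ² / (2t)) * sinh (σ / 2)`. This integrand is even, and completing the square expresses
it through the densities of Gaussians of variance `t` and means `± t / 2`, so the integral is read
off from these means; the completed square produces the factor `exp (t / 8)`.
-/

open Set ProbabilityTheory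
open scoped NNReal

section Fubini

variable {α E : Type*} [LinearOrder α] [TopologicalSpace α] [OrderClosedTopology α]
  [SecondCountableTopology α] [MeasurableSpace α] [OpensMeasurableSpace α]
  [NormedAddCommGroup E] {μ ν : Measure α} {f : α → α → E}

lemma integrableOn_setOf_fst_lt_snd_iff [SFinite μ] [SFinite ν]
    (hf : AEStronglyMeasurable (Function.uncurry f) ((μ.prod ν).restrict {p | p.1 < p.2})) :
    IntegrableOn (Function.uncurry f) {p | p.1 < p.2} (μ.prod ν) ↔
      (∀ᵐ s ∂ν, IntegrableOn (f · s) (Iio s) μ) ∧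
        Integrable (fun s ↦ ∫ r in Iio s, ‖f r s‖ ∂μ) ν := by
  have hlt : MeasurableSet {p : α × α | p.1 < p.2} := measurableSet_lt measurable_fst measurable_snd
  have hslice (s : α) : (fun r ↦ {p : α × α | p.1 < p.2}.indicator (Function.uncurry f) (r, s)) =
      (Iio s).indicator (f · s) := rfl
  rw [← integrable_indicator_iff hlt,
    integrable_prod_iff' ((aestronglyMeasurable_indicator_iff hlt).2 hf)]
  simp only [hslice, norm_indicator_eq_indicator_norm]
  simp only [← integral_indicator measurableSet_Iio, integrable_indicator_iff measurableSet_Iio]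
  rfl

lemma integral_setIntegral_Ioi_swap [SFinite μ] [SFinite ν] [NormedSpace ℝ E]
    (hf : IntegrableOn (Function.uncurry f) {p | p.1 < p.2} (μ.prod ν)) :
    ∫ r, ∫ s in Ioi r, f r s ∂ν ∂μ = ∫ s, ∫ r in Iio s, f r s ∂μ ∂ν := by
  rw [← integrable_indicator_iff (measurableSet_lt measurable_fst measurable_snd)] at hf
  simp only [← integral_indicator measurableSet_Ioi, ← integral_indicator measurableSet_Iio]
  exact integral_integral_swap hf

end Fubini

section FractionalIntegral

variable {g g' w : ℝ → ℝ} {a b q : ℝ}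

lemma intervalIntegrable_const_sub_rpow (hq : -1 < q) :
    IntervalIntegrable (fun x ↦ (b - x) ^ q) volume a b := by
  simpa using (intervalIntegral.intervalIntegrable_rpow' (a := b - a) (b := 0) hq).comp_sub_left b

lemma integral_const_sub_rpow (hq : -1 < q) :
    ∫ x in a..b, (b - x) ^ q = (b - a) ^ (q + 1) / (q + 1) := by
  rw [intervalIntegral.integral_comp_sub_left (· ^ q), sub_self, integral_rpow (.inl hq),
    Real.zero_rpow (by linarith), sub_zero]

lemma integrableOn_deriv_mul_rpow_sub (hab : a ≤ b) (hq : -1 < q)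
    (hg : ContinuousOn g (Icc a b))
    (hg' : ∀ r ∈ Ioo a b, HasDerivAt g (g' r) r) (hg'_nonneg : ∀ r ∈ Ioo a b, 0 ≤ g' r) :
    IntegrableOn (fun r ↦ g' r * (g b - g r) ^ q) (Ioo a b) := by
  rw [← uIcc_of_le hab] at hg
  have h := (intervalIntegral.integrable_comp_mul_deriv_iff_of_deriv_nonneg
    (g := fun u ↦ (g b - u) ^ q) hg (by simpa [hab] using hg') (by simpa [hab] using hg'_nonneg)).2
      (intervalIntegrable_const_sub_rpow hq)
  rw [← intervalIntegrable_iff_integrableOn_Ioo_of_le hab]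
  simpa only [mul_comm, Function.comp_apply] using h

lemma setIntegral_deriv_mul_rpow_sub (hab : a ≤ b) (hq : -1 < q) (hg : ContinuousOn g (Icc a b))
    (hg' : ∀ r ∈ Ioo a b, HasDerivAt g (g' r) r) (hg'_nonneg : ∀ r ∈ Ioo a b, 0 ≤ g' r) :
    ∫ r in Ioo a b, g' r * (g b - g r) ^ q = (g b - g a) ^ (q + 1) / (q + 1) := by
  rw [← uIcc_of_le hab] at hg
  have h := intervalIntegral.integral_comp_mul_deriv_of_deriv_nonneg
    (g := fun u ↦ (g b - u) ^ q) hg (by simpa [hab] using hg') (by simpa [hab] using hg'_nonneg)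
  rw [integral_const_sub_rpow hq] at h
  simpa only [mul_comm, Function.comp_apply, intervalIntegral.integral_of_le hab,
    integral_Ioc_eq_integral_Ioo] using h

lemma setIntegral_norm_mul_deriv_mul_rpow_sub (c : ℝ) (hab : a ≤ b) (hq : -1 < q)
    (hg : ContinuousOn g (Icc a b)) (hg' : ∀ r ∈ Ioo a b, HasDerivAt g (g' r) r)
    (hg'_nonneg : ∀ r ∈ Ioo a b, 0 ≤ g' r) :
    ∫ r in Ioo a b, ‖c * (g' r * (g b - g r) ^ q)‖ = ‖c * (g b - g a) ^ (q + 1)‖ / (q + 1) := by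
  have hmono : MonotoneOn g (Icc a b) :=
    monotoneOn_of_hasDerivWithinAt_nonneg (convex_Icc a b) hg
      (fun r hr ↦ (hg' r (by simpa using hr)).hasDerivWithinAt)
      (fun r hr ↦ hg'_nonneg r (by simpa using hr))
  have hsub_nonneg {r : ℝ} (hr : r ∈ Icc a b) : 0 ≤ g b - g r :=
    sub_nonneg.2 (hmono hr (right_mem_Icc.2 hab) hr.2)
  have hnorm : EqOn (fun r ↦ ‖c * (g' r * (g b - g r) ^ q)‖)
      (fun r ↦ ‖c‖ * (g' r * (g b - g r) ^ q)) (Ioo a b) := fun r hr ↦ by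
    have hpow := rpow_nonneg (hsub_nonneg (Ioo_subset_Icc_self hr)) q
    beta_reduce
    rw [norm_mul, norm_of_nonneg (mul_nonneg (hg'_nonneg r hr) hpow)]
  rw [setIntegral_congr_fun measurableSet_Ioo hnorm, integral_const_mul,
    setIntegral_deriv_mul_rpow_sub hab hq hg hg' hg'_nonneg, norm_mul,
    norm_of_nonneg (rpow_nonneg (hsub_nonneg (left_mem_Icc.2 hab)) _), mul_div_assoc]

lemma integrableOn_mul_deriv_mul_rpow_sub (hq : -1 < q) (hg : ContinuousOn g (Ici a))
    (hg' : ∀ r ∈ Ioi a, HasDerivAt g (g' r) r) (hg'_nonneg : ∀ r ∈ Ioi a, 0 ≤ g' r)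
    (hw : AEStronglyMeasurable w (volume.restrict (Ioi a)))
    (hwg : IntegrableOn (fun s ↦ w s * (g s - g a) ^ (q + 1)) (Ioi a)) :
    IntegrableOn (Function.uncurry fun r s ↦ w s * (g' r * (g s - g r) ^ q)) {p | p.1 < p.2}
      ((volume.restrict (Ioi a)).prod (volume.restrict (Ioi a))) := by
  have hg_meas : AEMeasurable g (volume.restrict (Ioi a)) :=
    (hg.mono Ioi_subset_Ici_self).aemeasurable measurableSet_Ioi
  have hg'_meas : AEMeasurable g' (volume.restrict (Ioi a)) :=
    (aemeasurable_deriv g _).congr <|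
      ae_restrict_of_forall_mem measurableSet_Ioi fun r hr ↦ (hg' r hr).deriv
  have h_meas : AEStronglyMeasurable (Function.uncurry fun r s ↦ w s * (g' r * (g s - g r) ^ q))
      ((volume.restrict (Ioi a)).prod (volume.restrict (Ioi a))) :=
    (hw.aemeasurable.comp_snd.mul (hg'_meas.comp_fst.mul
      ((hg_meas.comp_snd.sub hg_meas.comp_fst).pow_const q))).aestronglyMeasurable
  rw [integrableOn_setOf_fst_lt_snd_iff h_meas.restrict]
  simp only [IntegrableOn, Measure.restrict_restrict measurableSet_Iio, Iio_inter_Ioi]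
  constructor
  · refine ae_restrict_of_forall_mem measurableSet_Ioi fun s hs ↦ ?_
    exact (integrableOn_deriv_mul_rpow_sub (mem_Ioi.1 hs).le hq (hg.mono Icc_subset_Ici_self)
      (fun r hr ↦ hg' r hr.1) (fun r hr ↦ hg'_nonneg r hr.1)).const_mul (w s)
  · refine (hwg.norm.div_const (q + 1)).congr <|
      ae_restrict_of_forall_mem measurableSet_Ioi fun s hs ↦ ?_
    exact (setIntegral_norm_mul_deriv_mul_rpow_sub (w s) (mem_Ioi.1 hs).le hq
      (hg.mono Icc_subset_Ici_self) (fun r hr ↦ hg' r hr.1) (fun r hr ↦ hg'_nonneg r hr.1)).symm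

/-- For `g = id` this is, up to Gamma factors, the semigroup law `I¹ ∘ I^(q+1) = I^(q+2)` of Weyl
fractional integrals. -/
theorem integral_Ioi_deriv_mul_integral_Ioi_mul_rpow_sub (hq : -1 < q)
    (hg : ContinuousOn g (Ici a)) (hg' : ∀ r ∈ Ioi a, HasDerivAt g (g' r) r)
    (hg'_nonneg : ∀ r ∈ Ioi a, 0 ≤ g' r)
    (hw : AEStronglyMeasurable w (volume.restrict (Ioi a)))
    (hwg : IntegrableOn (fun s ↦ w s * (g s - g a) ^ (q + 1)) (Ioi a)) :
    ∫ r in Ioi a, g' r * ∫ s in Ioi r, w s * (g s - g r) ^ q =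
      (∫ s in Ioi a, w s * (g s - g a) ^ (q + 1)) / (q + 1) := by
  calc ∫ r in Ioi a, g' r * ∫ s in Ioi r, w s * (g s - g r) ^ q
    _ = ∫ r in Ioi a, ∫ s in Ioi r, w s * (g' r * (g s - g r) ^ q) ∂volume.restrict (Ioi a) := by
      refine setIntegral_congr_fun measurableSet_Ioi fun r hr ↦ ?_
      simp only [Measure.restrict_restrict measurableSet_Ioi, Ioi_inter_Ioi,
        sup_eq_left.2 (mem_Ioi.1 hr).le, ← integral_const_mul, mul_left_comm (g' r)]
    _ = ∫ s in Ioi a, ∫ r in Iio s, w s * (g' r * (g s - g r) ^ q) ∂volume.restrict (Ioi a) :=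
      integral_setIntegral_Ioi_swap
        (integrableOn_mul_deriv_mul_rpow_sub hq hg hg' hg'_nonneg hw hwg)
    _ = ∫ s in Ioi a, w s * (g s - g a) ^ (q + 1) / (q + 1) := by
      refine setIntegral_congr_fun measurableSet_Ioi fun s hs ↦ ?_
      simp only [Measure.restrict_restrict measurableSet_Iio, Iio_inter_Ioi, integral_const_mul]
      rw [setIntegral_deriv_mul_rpow_sub (mem_Ioi.1 hs).le hq (hg.mono Icc_subset_Ici_self)
        (fun r hr ↦ hg' r hr.1) (fun r hr ↦ hg'_nonneg r hr.1), mul_div_assoc]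
    _ = (∫ s in Ioi a, w s * (g s - g a) ^ (q + 1)) / (q + 1) := integral_div ..

end FractionalIntegral

section Gaussian

lemma integrable_gaussianPDFReal_mul_id (m : ℝ) {v : ℝ≥0} (hv : v ≠ 0) :
    Integrable (fun x ↦ gaussianPDFReal m v x * x) := by
  have h := (memLp_id_gaussianReal (μ := m) (v := v) 1).integrable (by simp)
  rw [gaussianReal_of_var_ne_zero m hv,
    integrable_withDensity_iff_integrable_smul' (measurable_gaussianPDF m v)
    (ae_of_all _ fun _ ↦ gaussianPDF_lt_top)] at h
  simpa using h

lemma integral_gaussianPDFReal_mul_id (m : ℝ) {v : ℝ≥0} (hv : v ≠ 0) :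
    ∫ x, gaussianPDFReal m v x * x = m := by
  simpa using (integral_gaussianReal_eq_integral_smul (f := id) hv).symm.trans
    integral_id_gaussianReal

variable {t : ℝ}

lemma exp_neg_sq_div_mul_exp_mul (ht : 0 < t) (a x : ℝ) :
    exp (-x ^ 2 / (2 * t)) * exp (a * x) =
      √(2 * π * t) * exp (a ^ 2 * t / 2) * gaussianPDFReal (a * t) t.toNNReal x := by
  have hsq : exp (-x ^ 2 / (2 * t)) * exp (a * x) =
      exp (a ^ 2 * t / 2) * exp (-(x - a * t) ^ 2 / (2 * t)) := by
    rw [← exp_add, ← exp_add]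
    congr 1
    field_simp
    ring
  rw [gaussianPDFReal, coe_toNNReal t ht.le, hsq]
  field_simp

lemma mul_exp_neg_sq_div_mul_sinh (ht : 0 < t) (a x : ℝ) :
    x * exp (-x ^ 2 / (2 * t)) * sinh (a * x) = √(2 * π * t) * exp (a ^ 2 * t / 2) / 2 *
      (gaussianPDFReal (a * t) t.toNNReal x * x - gaussianPDFReal (-a * t) t.toNNReal x * x) := by
  have hpos := exp_neg_sq_div_mul_exp_mul ht a x
  have hneg := exp_neg_sq_div_mul_exp_mul ht (-a) x
  rw [neg_sq] at hneg
  rw [sinh_eq, ← neg_mul]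
  linear_combination x / 2 * hpos - x / 2 * hneg

lemma integrable_mul_exp_neg_sq_div_mul_sinh (ht : 0 < t) (a : ℝ) :
    Integrable (fun x ↦ x * exp (-x ^ 2 / (2 * t)) * sinh (a * x)) := by
  simp only [mul_exp_neg_sq_div_mul_sinh ht]
  have hv : t.toNNReal ≠ 0 := (toNNReal_pos.2 ht).ne'
  exact ((integrable_gaussianPDFReal_mul_id _ hv).sub
    (integrable_gaussianPDFReal_mul_id _ hv)).const_mul _

lemma integral_Ioi_mul_exp_neg_sq_div_mul_sinh (ht : 0 < t) (a : ℝ) :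
    ∫ x in Ioi 0, x * exp (-x ^ 2 / (2 * t)) * sinh (a * x) =
      √(2 * π * t) * exp (a ^ 2 * t / 2) * (a * t) / 2 := by
  have hv : t.toNNReal ≠ 0 := (toNNReal_pos.2 ht).ne'
  have heven (x : ℝ) : |x| * exp (-|x| ^ 2 / (2 * t)) * sinh (a * |x|) =
      x * exp (-x ^ 2 / (2 * t)) * sinh (a * x) := by
    rcases abs_choice x with hx | hx <;> simp [hx]
  have hline : ∫ x, x * exp (-x ^ 2 / (2 * t)) * sinh (a * x) =
      √(2 * π * t) * exp (a ^ 2 * t / 2) * (a * t) := by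
    simp only [mul_exp_neg_sq_div_mul_sinh ht]
    rw [integral_const_mul, integral_sub (integrable_gaussianPDFReal_mul_id _ hv)
      (integrable_gaussianPDFReal_mul_id _ hv), integral_gaussianPDFReal_mul_id _ hv,
      integral_gaussianPDFReal_mul_id _ hv]
    ring
  have hhalf := integral_comp_abs (f := fun x ↦ x * exp (-x ^ 2 / (2 * t)) * sinh (a * x))
  simp only [heven, hline] at hhalf
  linarith

end Gaussian

lemma sqrt_cosh_sub_one {x : ℝ} (hx : 0 ≤ x) : √(cosh x - 1) = √2 * sinh (1 / 2 * x) := by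
  have hdouble : cosh x - 1 = 2 * sinh (1 / 2 * x) ^ 2 := by
    have h := cosh_two_mul (1 / 2 * x)
    rw [cosh_sq, show 2 * (1 / 2 * x) = x by ring] at h
    linarith
  rw [hdouble, sqrt_mul zero_le_two, sqrt_sq (sinh_nonneg_iff.2 (by positivity))]

lemma integral_sinh_mul_integral_mul_exp_neg_sq_div_mul_rpow_cosh_sub {t : ℝ} (ht : 0 < t) :
    ∫ r in Ioi 0, sinh r *
      ∫ s in Ioi r, s * exp (-s ^ 2 / (2 * t)) * (cosh s - cosh r) ^ (-(1 : ℝ) / 2) =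
        √π * exp (t / 8) * t ^ ((3 : ℝ) / 2) := by
  have hkernel : EqOn
      (fun s ↦ s * exp (-s ^ 2 / (2 * t)) * (cosh s - cosh 0) ^ (-(1 : ℝ) / 2 + 1))
      (fun s ↦ √2 * (s * exp (-s ^ 2 / (2 * t)) * sinh (1 / 2 * s))) (Ioi 0) := fun s hs ↦ by
    have hexponent : -(1 : ℝ) / 2 + 1 = 1 / 2 := by norm_num
    beta_reduce
    rw [cosh_zero, hexponent, ← sqrt_eq_rpow, sqrt_cosh_sub_one (mem_Ioi.1 hs).le]
    ring
  have hkernel_int := (integrableOn_congr_fun hkernel measurableSet_Ioi).2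
    ((integrable_mul_exp_neg_sq_div_mul_sinh ht (1 / 2)).const_mul √2).integrableOn
  have htpow : t ^ ((3 : ℝ) / 2) = t * √t := by
    rw [sqrt_eq_rpow, ← rpow_one_add' ht.le (by norm_num)]
    norm_num
  have hexp : exp ((1 / 2) ^ 2 * t / 2) = exp (t / 8) := by ring_nf
  rw [integral_Ioi_deriv_mul_integral_Ioi_mul_rpow_sub (by norm_num)
      continuous_cosh.continuousOn (fun r _ ↦ hasDerivAt_cosh r)
      (fun r hr ↦ sinh_nonneg_iff.2 (mem_Ioi.1 hr).le) (by fun_prop) hkernel_int,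
    setIntegral_congr_fun measurableSet_Ioi hkernel, integral_const_mul,
    integral_Ioi_mul_exp_neg_sq_div_mul_sinh ht, htpow, hexp, sqrt_mul (by positivity),
    sqrt_mul zero_le_two]
  linear_combination √π * exp (t / 8) * t * √t / 2 * mul_self_sqrt zero_le_two

lemma integral_pdens (c : ℝ) {t : ℝ} (ht : 0 < t) : ∫ r in Ioi 0, pdens c t r = c * √π := by
  have hexp : exp (-t / 8) * exp (t / 8) = 1 := by
    rw [← exp_add, neg_div, neg_add_cancel, exp_zero]
  have htpow : t ^ (-(3 : ℝ) / 2) * t ^ ((3 : ℝ) / 2) = 1 := by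
    rw [← rpow_add ht, neg_div, neg_add_cancel, rpow_zero]
  calc ∫ r in Ioi 0, pdens c t r
    _ = c * exp (-t / 8) * t ^ (-(3 : ℝ) / 2) * (√π * exp (t / 8) * t ^ ((3 : ℝ) / 2)) := by
      simp only [pdens, mul_assoc (c * exp (-t / 8) * t ^ (-(3 : ℝ) / 2)), integral_const_mul,
        integral_sinh_mul_integral_mul_exp_neg_sq_div_mul_rpow_cosh_sub ht]
    _ = c * √π * (exp (-t / 8) * exp (t / 8)) * (t ^ (-(3 : ℝ) / 2) * t ^ ((3 : ℝ) / 2)) := by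
      ring
    _ = c * √π := by rw [hexp, htpow, mul_one, mul_one]

theorem heat_kernel_is_probability_density (t : ℝ) (ht : 0 < t) :
    ∫ r in Set.Ioi (0 : ℝ), pdens (Real.pi ^ (-(1 : ℝ) / 2)) t r = 1 := by
  rw [integral_pdens _ ht, sqrt_eq_rpow, ← rpow_add pi_pos, neg_div, neg_add_cancel, rpow_zero]
end

section
/- Let R > 0, t > 0, and let f : [0,t] → ℝ be a continuous function with f(0) ≥ R and f(r) ≥ R/2 for all r ∈ [0,t]. Then (1 − e^{−R})^{1/2} ≤ ( (1 − e^{−2 f(t)}) / (1 − e^{−2 f(0)}) )^{1/2} · exp( (1/8) ∫_0^t ( coth²(f(r)) − 1 ) dr ) ≤ exp( t / (8·sinh²(R/2)) ) · (1 − e^{−2R})^{−1/2}, where coth(x) = cosh(x)/sinh(x). -/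
open MeasureTheory Real

/-!
Since `coth² - 1 = 1 / sinh²` is nonnegative and decreasing on the positive half-line, its time
integral along a path staying above `b` lies between `0` and the length of the time interval times
`1 / sinh² b`. As `x ↦ 1 - exp (-2 x)` increases from `0` to `1` there, a quotient of two of its
values is at least the numerator and at most the inverse of the denominator.
-/

section HyperbolicCotangent

lemma coth_sq_sub_one {x : ℝ} (hx : x ≠ 0) :
    (cosh x / sinh x) ^ 2 - 1 = (sinh x ^ 2)⁻¹ := by
  have hsinh : sinh x ≠ 0 := sinh_ne_zero.mpr hx
  rw [div_pow, cosh_sq, add_div, div_self (pow_ne_zero 2 hsinh), add_sub_cancel_left, one_div]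

lemma coth_sq_sub_one_nonneg {x : ℝ} (hx : x ≠ 0) : 0 ≤ (cosh x / sinh x) ^ 2 - 1 := by
  rw [coth_sq_sub_one hx]
  positivity

lemma coth_sq_sub_one_le_inv_sinh_sq {b x : ℝ} (hb : 0 < b) (hbx : b ≤ x) :
    (cosh x / sinh x) ^ 2 - 1 ≤ (sinh b ^ 2)⁻¹ := by
  have hsinh_pos : 0 < sinh b := sinh_pos_iff.mpr hb
  have hsinh_le : sinh b ≤ sinh x := sinh_le_sinh.mpr hbx
  rw [coth_sq_sub_one (hb.trans_le hbx).ne']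
  exact inv_anti₀ (pow_pos hsinh_pos 2) (pow_le_pow_left₀ hsinh_pos.le hsinh_le 2)

end HyperbolicCotangent

section PathIntegral

variable {b s t : ℝ} {f : ℝ → ℝ}

lemma integral_coth_sq_sub_one_nonneg (hst : s ≤ t) (hf : ∀ r ∈ Set.Icc s t, f r ≠ 0) :
    0 ≤ ∫ r in s..t, ((cosh (f r) / sinh (f r)) ^ 2 - 1) :=
  intervalIntegral.integral_nonneg hst fun r hr ↦ coth_sq_sub_one_nonneg (hf r hr)

lemma intervalIntegrable_coth_sq_sub_one (hb : 0 < b) (hst : s ≤ t)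
    (hf_meas : AEMeasurable f (volume.restrict (Set.Icc s t)))
    (hf : ∀ r ∈ Set.Icc s t, b ≤ f r) :
    IntervalIntegrable (fun r ↦ (cosh (f r) / sinh (f r)) ^ 2 - 1) volume s t := by
  rw [intervalIntegrable_iff_integrableOn_Icc_of_le hst]
  have hmeas : AEMeasurable (fun r ↦ (cosh (f r) / sinh (f r)) ^ 2 - 1)
      (volume.restrict (Set.Icc s t)) := by
    fun_prop
  refine IntegrableOn.of_bound measure_Icc_lt_top hmeas.aestronglyMeasurable (sinh b ^ 2)⁻¹
    (ae_restrict_of_forall_mem measurableSet_Icc fun r hr ↦ ?_)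
  rw [norm_of_nonneg (coth_sq_sub_one_nonneg (hb.trans_le (hf r hr)).ne')]
  exact coth_sq_sub_one_le_inv_sinh_sq hb (hf r hr)

lemma integral_coth_sq_sub_one_le (hb : 0 < b) (hst : s ≤ t)
    (hf_meas : AEMeasurable f (volume.restrict (Set.Icc s t)))
    (hf : ∀ r ∈ Set.Icc s t, b ≤ f r) :
    ∫ r in s..t, ((cosh (f r) / sinh (f r)) ^ 2 - 1) ≤ (t - s) / sinh b ^ 2 :=
  calc ∫ r in s..t, ((cosh (f r) / sinh (f r)) ^ 2 - 1)
      ≤ ∫ _ in s..t, (sinh b ^ 2)⁻¹ :=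
        intervalIntegral.integral_mono_on hst
          (intervalIntegrable_coth_sq_sub_one hb hst hf_meas hf) intervalIntegrable_const
          fun r hr ↦ coth_sq_sub_one_le_inv_sinh_sq hb (hf r hr)
    _ = (t - s) / sinh b ^ 2 := by
        rw [intervalIntegral.integral_const, smul_eq_mul, div_eq_mul_inv]

end PathIntegral

section Prefactor

lemma one_sub_exp_neg_two_mul_pos {x : ℝ} (hx : 0 < x) : 0 < 1 - exp (-2 * x) :=
  sub_pos.mpr (exp_lt_one_iff.mpr (by linarith))

lemma one_sub_exp_neg_two_mul_le_one (x : ℝ) : 1 - exp (-2 * x) ≤ 1 :=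
  sub_le_self 1 (exp_nonneg _)

lemma monotone_one_sub_exp_neg_two_mul : Monotone fun x : ℝ ↦ 1 - exp (-2 * x) :=
  fun _ _ hxy ↦ sub_le_sub_left (exp_le_exp.mpr (by linarith)) 1

lemma one_sub_exp_le_div_one_sub_exp {b x y : ℝ} (hx : 0 < x) (hy : 0 < y) (hby : b ≤ y) :
    1 - exp (-2 * b) ≤ (1 - exp (-2 * y)) / (1 - exp (-2 * x)) :=
  (monotone_one_sub_exp_neg_two_mul hby).trans <|
    le_div_self (one_sub_exp_neg_two_mul_pos hy).le (one_sub_exp_neg_two_mul_pos hx)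
      (one_sub_exp_neg_two_mul_le_one x)

lemma div_one_sub_exp_le_inv_one_sub_exp {a x : ℝ} (y : ℝ) (ha : 0 < a) (hax : a ≤ x) :
    (1 - exp (-2 * y)) / (1 - exp (-2 * x)) ≤ (1 - exp (-2 * a))⁻¹ := by
  rw [← one_div]
  exact div_le_div₀ zero_le_one (one_sub_exp_neg_two_mul_le_one y)
    (one_sub_exp_neg_two_mul_pos ha) (monotone_one_sub_exp_neg_two_mul hax)

end Prefactor

theorem girsanov_density_ratio_bounds_general {a b t : ℝ} (ha : 0 < a) (hb : 0 < b) (ht : 0 ≤ t)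
    {f : ℝ → ℝ} (hf_meas : AEMeasurable f (volume.restrict (Set.Icc 0 t)))
    (hf0 : a ≤ f 0) (hf : ∀ r ∈ Set.Icc (0 : ℝ) t, b ≤ f r) :
    √(1 - exp (-2 * b)) ≤
        √((1 - exp (-2 * f t)) / (1 - exp (-2 * f 0))) *
          exp ((1 / 8) * ∫ r in (0 : ℝ)..t, ((cosh (f r) / sinh (f r)) ^ 2 - 1)) ∧
      √((1 - exp (-2 * f t)) / (1 - exp (-2 * f 0))) *
          exp ((1 / 8) * ∫ r in (0 : ℝ)..t, ((cosh (f r) / sinh (f r)) ^ 2 - 1)) ≤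
        exp (t / (8 * sinh b ^ 2)) * (√(1 - exp (-2 * a)))⁻¹ := by
  have hft : b ≤ f t := hf t (Set.right_mem_Icc.mpr ht)
  have hint_nonneg := integral_coth_sq_sub_one_nonneg ht fun r hr ↦ (hb.trans_le (hf r hr)).ne'
  have hint_le := integral_coth_sq_sub_one_le hb ht hf_meas hf
  have hexponent_le :
      (1 / 8) * ∫ r in (0 : ℝ)..t, ((cosh (f r) / sinh (f r)) ^ 2 - 1) ≤
        t / (8 * sinh b ^ 2) := by
    calc (1 / 8) * ∫ r in (0 : ℝ)..t, ((cosh (f r) / sinh (f r)) ^ 2 - 1)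
        ≤ (1 / 8) * ((t - 0) / sinh b ^ 2) := by gcongr
      _ = t / (8 * sinh b ^ 2) := by rw [sub_zero, div_mul_div_comm, one_mul]
  constructor
  · have hprefactor :=
      sqrt_le_sqrt (one_sub_exp_le_div_one_sub_exp (ha.trans_le hf0) (hb.trans_le hft) hft)
    exact hprefactor.trans <|
      le_mul_of_one_le_right (sqrt_nonneg _) (one_le_exp (by positivity))
  · have hprefactor := sqrt_le_sqrt (div_one_sub_exp_le_inv_one_sub_exp (f t) ha hf0)
    rw [sqrt_inv] at hprefactor
    rw [mul_comm]
    gcongr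

theorem girsanov_density_ratio_bounds (R t : ℝ) (hR : 0 < R) (ht : 0 < t)
    (f : ℝ → ℝ) (hf_cont : ContinuousOn f (Set.Icc 0 t))
    (hf0 : R ≤ f 0) (hf : ∀ r ∈ Set.Icc (0 : ℝ) t, R / 2 ≤ f r) :
    Real.sqrt (1 - Real.exp (-R)) ≤
        Real.sqrt ((1 - Real.exp (-2 * f t)) / (1 - Real.exp (-2 * f 0))) *
          Real.exp ((1 / 8) *
            ∫ r in (0 : ℝ)..t, (Real.cosh (f r) / Real.sinh (f r)) ^ 2 - 1) ∧
      Real.sqrt ((1 - Real.exp (-2 * f t)) / (1 - Real.exp (-2 * f 0))) *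
          Real.exp ((1 / 8) *
            ∫ r in (0 : ℝ)..t, (Real.cosh (f r) / Real.sinh (f r)) ^ 2 - 1) ≤
        Real.exp (t / (8 * Real.sinh (R / 2) ^ 2)) * (Real.sqrt (1 - Real.exp (-2 * R)))⁻¹ := by
  have h := girsanov_density_ratio_bounds_general hR (half_pos hR) ht.le
    (hf_cont.aemeasurable measurableSet_Icc) hf0 hf
  rwa [neg_mul, mul_div_cancel₀ R two_ne_zero] at h
end
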